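/- arXiv:2604.26950 — 3 statements merged into one kernel-verified Lean document; each statement's English description precedes it below -/
import Mathlib

section
/- Let K be a field of characteristic zero, w a weighting of K^n, and P : Fin n → MvPolynomial (Fin n) K a tuple that is quasi-homogeneous of weighted degree 0, i.e. every multi-index β in the support of P^i satisfies ⟨w,β⟩ = w i. Let A : Matrix (Fin n) (Fin n) K be given by A i j = (coefficient of e_j in P^i), and let λ : Fin n → K be such that for every value c attained by w, the characteristic polynomial of the square submatrix of A on {i : w i = c} equals the product over {i : w i = c} of (T − λ i). Fix an integer k ≥ 1 and assume non-resonance of weighted degree k: for every i and every finitely supported α : Fin n → ℕ with ⟨w,α⟩ = w i + k, one has Σ_j (α j)·(λ j) ≠ λ i. Then the adjoint operator ad_P is bijective on quasi-homogeneous polynomial vector fields of weighted degree k: for every tuple Y : Fin n → MvPolynomial (Fin n) K with every β in the support of Y^i satisfying ⟨w,β⟩ = w i + k, there exists a unique tuple U : Fin n → MvPolynomial (Fin n) K with the same quasi-homogeneity property such that for every i, Σ_j (P^j · pderiv j (U^i) − U^j · pderiv j (P^i)) = Y^i. -/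
/-!
Regard `P` as a derivation `D` of the polynomial ring. Modulo polynomials in variables of smaller
weight, `D` acts on the variables of weight `c` through the block of `A` of weight `c`. By
Cayley–Hamilton and induction on the weight, each variable therefore lies in the sum of the
generalized eigenspaces of `D` for sums `∑ j, α j * λ j` with `⟨w, α⟩` equal to its weight, and by
the Leibniz rule the same holds for every quasi-homogeneous polynomial.

If `ad_P U = 0` and the components of `U` of weight less than `c` vanish, then `D` acts on the
components of weight `c` through the block of `A` of weight `c`, so these components are sums of
generalized eigenvectors for the eigenvalues `λ j` with `w j = c`. They have weight `c + k`, so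
non-resonance forces them to vanish. Hence `ad_P` is injective on a finite-dimensional space, and
so bijective.
-/

open Polynomial (aeval)
open MvPolynomial hiding aeval
open scoped Pointwise

noncomputable section

section DeterminantTrick

theorem det_smul_mem_of_forall_sum_smul_mem {R M ι : Type*} [CommRing R] [AddCommGroup M]
    [Module R M] [Fintype ι] [DecidableEq ι] {N : Submodule R M} {B : Matrix ι ι R} {v : ι → M}
    (h : ∀ i, ∑ j, B i j • v j ∈ N) (i : ι) : B.det • v i ∈ N := by
  have key : B.det • v i = ∑ k, B.adjugate i k • ∑ j, B k j • v j := by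
    calc B.det • v i = ∑ j, (B.adjugate * B) i j • v j := by
          simp [Matrix.adjugate_mul, Matrix.one_apply, ite_smul]
      _ = ∑ k, B.adjugate i k • ∑ j, B k j • v j := by
          simp only [Matrix.mul_apply, Finset.sum_smul, Finset.smul_sum, mul_smul]
          exact Finset.sum_comm
  rw [key]
  exact N.sum_mem fun k _ => N.smul_mem _ (h k)

end DeterminantTrick

section SpectralSubmodule

variable {K M : Type*} [CommRing K] [AddCommGroup M] [Module K M]

/-- The monoid of products of linear factors `X - s` with `s ∈ S`. -/
def monicSplitWithRootsIn (S : Set K) : Submonoid (Polynomial K) :=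
  Submonoid.closure ((fun s => Polynomial.X - Polynomial.C s) '' S)

theorem X_sub_C_mem_monicSplitWithRootsIn {S : Set K} {s : K} (hs : s ∈ S) :
    Polynomial.X - Polynomial.C s ∈ monicSplitWithRootsIn S :=
  Submonoid.subset_closure ⟨s, hs, rfl⟩

/-- The sum of the generalized eigenspaces of `T` for eigenvalues in `S`, described as the set of
vectors killed by some product of factors `T - s` with `s ∈ S`. -/
def spectralSubmodule (T : Module.End K M) (S : Set K) : Submodule K M :=
  ((Module.AEval.mapSubmodule K M T).symm
    (Submodule.torsion' (Polynomial K) (Module.AEval' T) (monicSplitWithRootsIn S))).1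

variable {T : Module.End K M} {S S' : Set K} {x : M}

theorem mem_spectralSubmodule_iff :
    x ∈ spectralSubmodule T S ↔ ∃ p ∈ monicSplitWithRootsIn S, aeval T p x = 0 :=
  ⟨fun ⟨p, hp⟩ => ⟨p.1, p.2, hp⟩, fun ⟨p, hp, hx⟩ => ⟨⟨p, hp⟩, hx⟩⟩

theorem mem_spectralSubmodule_of_aeval_mem {p : Polynomial K} (hp : p ∈ monicSplitWithRootsIn S)
    (h : aeval T p x ∈ spectralSubmodule T S) : x ∈ spectralSubmodule T S := by
  obtain ⟨q, hq, hqx⟩ := mem_spectralSubmodule_iff.1 h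
  exact mem_spectralSubmodule_iff.2
    ⟨q * p, mul_mem hq hp, by rwa [map_mul, Module.End.mul_apply]⟩

theorem mem_spectralSubmodule_of_sub_smul_mem {s : K} (hs : s ∈ S)
    (h : T x - s • x ∈ spectralSubmodule T S) : x ∈ spectralSubmodule T S :=
  mem_spectralSubmodule_of_aeval_mem (X_sub_C_mem_monicSplitWithRootsIn hs) <| by
    simpa [Module.algebraMap_end_apply] using h

theorem spectralSubmodule_induction {motive : ∀ x, x ∈ spectralSubmodule T S → Prop}
    (zero : motive 0 (zero_mem _))
    (step : ∀ s (hs : s ∈ S) x (hx : T x - s • x ∈ spectralSubmodule T S),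
      motive _ hx → motive x (mem_spectralSubmodule_of_sub_smul_mem hs hx))
    (hx : x ∈ spectralSubmodule T S) : motive x hx := by
  obtain ⟨p, hp, hpx⟩ := mem_spectralSubmodule_iff.1 hx
  induction hp using Submonoid.closure_induction_right generalizing x with
  | one =>
    obtain rfl : x = 0 := by simpa using hpx
    exact zero
  | mul_right p hp _ hs ih =>
    obtain ⟨s, hs, rfl⟩ := hs
    have hpx' : aeval T p (T x - s • x) = 0 := by
      simpa [Module.algebraMap_end_apply] using hpx
    have hx' := mem_spectralSubmodule_iff.2 ⟨p, hp, hpx'⟩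
    exact step s hs x hx' (ih hx' hpx')

theorem spectralSubmodule_mono (h : S ⊆ S') : spectralSubmodule T S ≤ spectralSubmodule T S' :=
  fun _ hx =>
    have ⟨p, hp, hpx⟩ := mem_spectralSubmodule_iff.1 hx
    mem_spectralSubmodule_iff.2
      ⟨p, Submonoid.closure_mono (Set.image_mono h) hp, hpx⟩

theorem isCoprime_of_mem_monicSplitWithRootsIn {K : Type*} [Field K] {S S' : Set K}
    (h : Disjoint S S') {p q : Polynomial K} (hp : p ∈ monicSplitWithRootsIn S)
    (hq : q ∈ monicSplitWithRootsIn S') : IsCoprime p q := by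
  induction hp using Submonoid.closure_induction with
  | one => exact isCoprime_one_left
  | mul _ _ _ _ h₁ h₂ => exact h₁.mul_left h₂
  | mem p hp =>
    induction hq using Submonoid.closure_induction with
    | one => exact isCoprime_one_right
    | mul _ _ _ _ h₁ h₂ => exact h₁.mul_right h₂
    | mem q hq =>
      obtain ⟨s, hs, rfl⟩ := hp
      obtain ⟨t, ht, rfl⟩ := hq
      exact Polynomial.isCoprime_X_sub_C_of_isUnit_sub (sub_ne_zero.2 (h.ne_of_mem hs ht)).isUnit

theorem disjoint_spectralSubmodule {K M : Type*} [Field K] [AddCommGroup M] [Module K M]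
    (T : Module.End K M) {S S' : Set K} (h : Disjoint S S') :
    Disjoint (spectralSubmodule T S) (spectralSubmodule T S') := by
  refine Submodule.disjoint_def.2 fun x hx hx' => ?_
  obtain ⟨p, hp, hpx⟩ := mem_spectralSubmodule_iff.1 hx
  obtain ⟨q, hq, hqx⟩ := mem_spectralSubmodule_iff.1 hx'
  have hpq := isCoprime_of_mem_monicSplitWithRootsIn h hp hq
  exact Submodule.disjoint_def.1 (Polynomial.disjoint_ker_aeval_of_isCoprime T hpq) x hpx hqx

theorem mem_spectralSubmodule_of_charpoly {ι : Type*} [Fintype ι] [DecidableEq ι]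
    {A : Matrix ι ι K} (hA : A.charpoly ∈ monicSplitWithRootsIn S) {v : ι → M}
    (h : ∀ i, T (v i) - ∑ j, A i j • v j ∈ spectralSubmodule T S) (i : ι) :
    v i ∈ spectralSubmodule T S := by
  refine mem_spectralSubmodule_of_aeval_mem hA ?_
  refine det_smul_mem_of_forall_sum_smul_mem (B := A.charmatrix)
    (v := fun j => Module.AEval'.of T (v j))
    (N := Submodule.torsion' _ _ (monicSplitWithRootsIn S)) (fun i => ?_) i
  have : ∑ j, A.charmatrix i j • Module.AEval'.of T (v j) =
      Module.AEval'.of T (T (v i) - ∑ j, A i j • v j) := by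
    simp [Matrix.charmatrix_apply, sub_smul, Matrix.diagonal_apply, ite_smul,
      Module.AEval'.X_smul_of]
  rw [this]
  exact h i

end SpectralSubmodule

section Derivation

variable {K R : Type*} [CommRing K] [CommRing R] [Algebra K R] (D : Derivation K R R)

theorem mul_mem_spectralSubmodule {S S' : Set K} {f g : R}
    (hf : f ∈ spectralSubmodule (D : Module.End K R) S)
    (hg : g ∈ spectralSubmodule (D : Module.End K R) S') :
    f * g ∈ spectralSubmodule (D : Module.End K R) (S + S') := by
  induction hf using spectralSubmodule_induction generalizing g with
  | zero => simp
  | step s hs f _ ihf =>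
    induction hg using spectralSubmodule_induction with
    | zero => simp
    | step t ht g hg ihg =>
      have leibniz : D (f * g) - (s + t) • (f * g) = (D f - s • f) * g + f * (D g - t • g) := by
        simp only [D.leibniz, smul_eq_mul, Algebra.smul_def, map_add]
        ring
      refine mem_spectralSubmodule_of_sub_smul_mem (Set.add_mem_add hs ht) ?_
      rw [Derivation.coeFn_coe, leibniz]
      exact add_mem (ihf (mem_spectralSubmodule_of_sub_smul_mem ht hg)) ihg

theorem gradedMonoid_spectralSubmodule {ι : Type*} [AddMonoid ι] {S : ι → Set K}
    (zero_mem : 0 ∈ S 0) (add_subset : ∀ i j, S i + S j ⊆ S (i + j)) :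
    SetLike.GradedMonoid fun i => spectralSubmodule (D : Module.End K R) (S i) where
  one_mem := mem_spectralSubmodule_of_sub_smul_mem zero_mem (by simp)
  mul_mem i j _ _ hf hg :=
    spectralSubmodule_mono (add_subset i j) (mul_mem_spectralSubmodule D hf hg)

end Derivation

section Weights

variable {σ R : Type*} [CommSemiring R]

theorem eq_single_or_lt_weight {w : σ → ℕ} (hw : ∀ i, w i ≠ 0) {d : σ →₀ ℕ} {j : σ}
    (hj : d j ≠ 0) : d = Finsupp.single j 1 ∨ w j < Finsupp.weight w d := by
  have := Finsupp.nonTorsionWeight_of ℕ (w := w) hw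
  have split := Finsupp.weight_sub_single_add (w := w) hj
  refine or_iff_not_imp_right.2 fun hlt => ?_
  have rest : d - Finsupp.single j 1 = 0 :=
    (Finsupp.weight_eq_zero_iff_eq_zero w).1 (by omega)
  rw [← Finsupp.sub_add_single_one_cancel hj, rest, zero_add]

theorem mem_graded_of_forall_X_mem {M : Type*} [AddCommMonoid M] {w : σ → M}
    {𝒜 : M → Submodule R (MvPolynomial σ R)} [SetLike.GradedMonoid 𝒜] {m : M}
    {φ : MvPolynomial σ R} (hφ : IsWeightedHomogeneous w φ m)
    (hX : ∀ d ∈ φ.support, ∀ j ∈ d.support, X j ∈ 𝒜 (w j)) : φ ∈ 𝒜 m := by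
  rw [φ.as_sum]
  refine sum_mem fun d hd => ?_
  rw [monomial_eq, ← smul_eq_C_mul, ← hφ (mem_support_iff.1 hd)]
  exact (𝒜 _).smul_mem _ <|
    SetLike.prod_mem_graded 𝒜 _ _ fun j hj => SetLike.pow_mem_graded _ (hX d hd j hj)

theorem pderiv_eq_zero_of_lt_weight {w : σ → ℕ} {m : ℕ} {φ : MvPolynomial σ R}
    (hφ : IsWeightedHomogeneous w φ m) {j : σ} (hj : m < w j) : pderiv j φ = 0 := by
  refine pderiv_eq_zero_of_notMem_vars fun hmem => ?_
  obtain ⟨d, hd, hdj⟩ := (mem_vars_iff_mem_support j).1 hmem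
  have := Finsupp.le_weight_of_ne_zero' w (Finsupp.mem_support_iff.1 hdj)
  rw [hφ (mem_support_iff.1 hd)] at this
  omega

theorem pderiv_eq_C_of_isWeightedHomogeneous {w : σ → ℕ} (hw : ∀ i, w i ≠ 0)
    {φ : MvPolynomial σ R} {j : σ} (hφ : IsWeightedHomogeneous w φ (w j)) :
    pderiv j φ = C (coeff (Finsupp.single j 1) φ) := by
  have hconst : IsWeightedHomogeneous w (pderiv j φ) 0 := hφ.pderiv (zero_add _)
  rw [← hconst.weightedHomogeneousComponent_same, weightedHomogeneousComponent_zero _ hw]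
  simp [coeff_pderiv]

theorem isWeightedHomogeneous_mul_pderiv {w : σ → ℕ} {m n : ℕ} {j : σ} {ψ φ : MvPolynomial σ R}
    (hψ : IsWeightedHomogeneous w ψ (w j + m)) (hφ : IsWeightedHomogeneous w φ n) :
    IsWeightedHomogeneous w (ψ * pderiv j φ) (m + n) := by
  obtain hj | hj := le_or_gt (w j) n
  · convert hψ.mul (hφ.pderiv (Nat.sub_add_cancel hj)) using 1
    omega
  · rw [pderiv_eq_zero_of_lt_weight hφ hj, mul_zero]
    exact isWeightedHomogeneous_zero R w _

theorem sum_mul_pderiv_eq_sum_coeff_smul [Fintype σ] {w : σ → ℕ} (hw : ∀ i, w i ≠ 0) {c : ℕ}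
    {φ : MvPolynomial σ R} (hφ : IsWeightedHomogeneous w φ c) {U : σ → MvPolynomial σ R}
    (hU : ∀ j, w j < c → U j = 0) :
    ∑ j, U j * pderiv j φ = ∑ j : {j // w j = c}, coeff (Finsupp.single j.1 1) φ • U j.1 := by
  have vanish (j) (hj : U j * pderiv j φ ≠ 0) : w j = c := by
    refine le_antisymm (not_lt.1 fun h => hj ?_) (not_lt.1 fun h => hj ?_)
    · rw [pderiv_eq_zero_of_lt_weight hφ h, mul_zero]
    · rw [hU j h, zero_mul]
  calc ∑ j, U j * pderiv j φ
      = ∑ j : {j // w j = c}, U j.1 * pderiv j.1 φ := by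
        rw [← Finset.sum_filter_of_ne fun j _ => vanish j,
          Finset.sum_subtype (p := fun j => w j = c) _ (by simp)]
    _ = ∑ j : {j // w j = c}, coeff (Finsupp.single j.1 1) φ • U j.1 :=
        Finset.sum_congr rfl fun j _ => by
          rw [pderiv_eq_C_of_isWeightedHomogeneous hw (by rwa [j.2]), mul_comm, ← smul_eq_C_mul]

end Weights

section Resonance

variable {σ K : Type*} [CommRing K]

/-- The sums `∑ j, α j * l j` over the multi-indices `α` of weight `m`.  If `l` lists the
eigenvalues of the linear part of a quasi-homogeneous field of weighted degree `0`, these are the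
eigenvalues of the field, as a derivation, on the polynomials of weight `m`. -/
def weightedSpectrum (w : σ → ℕ) (l : σ → K) (m : ℕ) : Set K :=
  Finsupp.weight l '' {α : σ →₀ ℕ | Finsupp.weight w α = m}

theorem mem_weightedSpectrum_iff_sum [Fintype σ] {w : σ → ℕ} {l : σ → K} {m : ℕ} {s : K} :
    s ∈ weightedSpectrum w l m ↔
      ∃ α : σ →₀ ℕ, ∑ j, w j * α j = m ∧ ∑ j, (α j : K) * l j = s := by
  simp [weightedSpectrum, Finsupp.weight_eq_sum, mul_comm]

variable (w : σ → ℕ) (l : σ → K)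

theorem zero_mem_weightedSpectrum : (0 : K) ∈ weightedSpectrum w l 0 :=
  ⟨0, map_zero _, map_zero _⟩

theorem apply_mem_weightedSpectrum (i : σ) : l i ∈ weightedSpectrum w l (w i) :=
  ⟨Finsupp.single i 1, by simp [Finsupp.weight_single], by simp [Finsupp.weight_single]⟩

theorem weightedSpectrum_add_subset (m n : ℕ) :
    weightedSpectrum w l m + weightedSpectrum w l n ⊆ weightedSpectrum w l (m + n) := by
  rintro _ ⟨_, ⟨α, rfl, rfl⟩, _, ⟨β, rfl, rfl⟩, rfl⟩
  exact ⟨α + β, map_add _ α β, map_add _ α β⟩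

/-- The sum of the generalized eigenspaces of the derivation `D` for the eigenvalues in
`weightedSpectrum w l m`.  As `m` varies, these submodules multiply like a grading. -/
def weightedSpectralSubmodule {R : Type*} [CommRing R] [Algebra K R] (D : Derivation K R R)
    (m : ℕ) : Submodule K R :=
  spectralSubmodule (D : Module.End K R) (weightedSpectrum w l m)

instance gradedMonoid_weightedSpectralSubmodule {R : Type*} [CommRing R] [Algebra K R]
    (D : Derivation K R R) : SetLike.GradedMonoid (weightedSpectralSubmodule w l D) :=
  gradedMonoid_spectralSubmodule D (zero_mem_weightedSpectrum w l) (weightedSpectrum_add_subset w l)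

end Resonance

section VectorFields

variable {σ R : Type*} [CommSemiring R]

/-- The polynomial vector fields `U`, given by their components `U i`, that are quasi-homogeneous
of weighted degree `k`. -/
def quasiHomogeneousFields (R : Type*) [CommSemiring R] (w : σ → ℕ) (k : ℕ) :
    Submodule R (σ → MvPolynomial σ R) :=
  Submodule.pi Set.univ fun i => weightedHomogeneousSubmodule R w (w i + k)

theorem mem_quasiHomogeneousFields_iff {w : σ → ℕ} {k : ℕ} {U : σ → MvPolynomial σ R} :
    U ∈ quasiHomogeneousFields R w k ↔ ∀ i, IsWeightedHomogeneous w (U i) (w i + k) := by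
  simp [quasiHomogeneousFields]

theorem mem_quasiHomogeneousFields_iff_sum [Fintype σ] {w : σ → ℕ} {k : ℕ}
    {U : σ → MvPolynomial σ R} :
    U ∈ quasiHomogeneousFields R w k ↔
      ∀ i, ∀ β ∈ (U i).support, ∑ j, w j * β j = w i + k := by
  simp [mem_quasiHomogeneousFields_iff, IsWeightedHomogeneous, Finsupp.weight_eq_sum, mul_comm]

theorem finite_quasiHomogeneousFields [Finite σ] {w : σ → ℕ} (hw : ∀ i, w i ≠ 0) (k : ℕ) :
    Module.Finite R (quasiHomogeneousFields R w k) :=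
  Module.Finite.iff_fg.2 <| Submodule.fg_pi fun _ => weightedHomogeneousSubmodule_fg R w hw _

/-- The matrix of the linear part of the vector field `P` at the origin, with entry `i j` the
coefficient of `X j` in `P i`. -/
def linearPart (P : σ → MvPolynomial σ R) : Matrix σ σ R :=
  Matrix.of fun i j => coeff (Finsupp.single j 1) (P i)

variable [Fintype σ]

theorem mkDerivation_apply_eq_sum (P : σ → MvPolynomial σ R) (φ : MvPolynomial σ R) :
    mkDerivation R P φ = ∑ j, P j * pderiv j φ := by
  classical
  have sum_apply (ψ) : (∑ j, P j • pderiv j) ψ = ∑ j, P j * pderiv j ψ := by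
    rw [← Derivation.coeFnAddMonoidHom_apply, map_sum, Finset.sum_apply]
    rfl
  have h : mkDerivation R P = ∑ j, P j • pderiv j :=
    derivation_ext fun i => by simp [sum_apply, pderiv_X, Pi.single_apply]
  rw [h, sum_apply]

variable {R : Type*} [CommRing R]

/-- The adjoint operator `ad_P : U ↦ [P, U]` on polynomial vector fields. -/
def adjointOperator (P : σ → MvPolynomial σ R) : Module.End R (σ → MvPolynomial σ R) where
  toFun U i := ∑ j, (P j * pderiv j (U i) - U j * pderiv j (P i))
  map_add' U V := by
    ext1 i
    simp only [Pi.add_apply, map_add, ← Finset.sum_add_distrib]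
    exact Finset.sum_congr rfl fun _ _ => by ring
  map_smul' c U := by
    ext1 i
    simp [Finset.smul_sum, smul_sub]

theorem adjointOperator_apply (P U : σ → MvPolynomial σ R) (i : σ) :
    adjointOperator P U i = ∑ j, (P j * pderiv j (U i) - U j * pderiv j (P i)) :=
  rfl

theorem adjointOperator_mem_quasiHomogeneousFields {w : σ → ℕ} {m k : ℕ}
    {P U : σ → MvPolynomial σ R} (hP : P ∈ quasiHomogeneousFields R w m)
    (hU : U ∈ quasiHomogeneousFields R w k) :
    adjointOperator P U ∈ quasiHomogeneousFields R w (m + k) := by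
  rw [mem_quasiHomogeneousFields_iff] at hP hU ⊢
  intro i
  refine sum_mem (S := weightedHomogeneousSubmodule R w _) fun j _ => sub_mem ?_ ?_
  · simpa [add_left_comm] using isWeightedHomogeneous_mul_pderiv (hP j) (hU i)
  · simpa [add_left_comm, add_comm] using isWeightedHomogeneous_mul_pderiv (hU j) (hP i)

end VectorFields

section DegreeZero

theorem sub_sum_linear_mem {σ R : Type*} [Fintype σ] [CommRing R] {w : σ → ℕ} (hw : ∀ i, w i ≠ 0)
    {𝒜 : ℕ → Submodule R (MvPolynomial σ R)} [SetLike.GradedMonoid 𝒜] {c : ℕ}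
    (hX : ∀ j, w j < c → X j ∈ 𝒜 (w j)) {φ : MvPolynomial σ R}
    (hφ : IsWeightedHomogeneous w φ c) :
    φ - ∑ j : {j // w j = c}, coeff (Finsupp.single j.1 1) φ • X j.1 ∈ 𝒜 c := by
  classical
  set ψ := φ - ∑ j : {j // w j = c}, coeff (Finsupp.single j.1 1) φ • X j.1 with hψ
  have homogeneous : IsWeightedHomogeneous w ψ c :=
    (weightedHomogeneousSubmodule R w c).sub_mem hφ <| Submodule.sum_mem _ fun j _ =>
      Submodule.smul_mem _ _ (by simpa [j.2] using isWeightedHomogeneous_X R w j.1)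
  have no_linear_term (j) (hj : w j = c) : coeff (Finsupp.single j 1) ψ = 0 := by
    rw [hψ, coeff_sub, coeff_sum, Finset.sum_eq_single ⟨j, hj⟩] <;>
      simp +contextual [coeff_X, Subtype.ext_iff, Finsupp.single_left_inj]
  refine mem_graded_of_forall_X_mem homogeneous fun d hd j hj => hX j ?_
  have weight_d := homogeneous (mem_support_iff.1 hd)
  obtain rfl | hlt := eq_single_or_lt_weight hw (Finsupp.mem_support_iff.1 hj)
  · have hjc : w j = c := by simpa [Finsupp.weight_single] using weight_d
    exact absurd (no_linear_term j hjc) (mem_support_iff.1 hd)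
  · rwa [weight_d] at hlt

variable {σ K : Type*} [Fintype σ] [DecidableEq σ] [Field K] {w : σ → ℕ}
  {P : σ → MvPolynomial σ K} {l : σ → K}

theorem X_mem_weightedSpectralSubmodule (hw : ∀ i, w i ≠ 0) (hP : P ∈ quasiHomogeneousFields K w 0)
    (hl : ∀ c ∈ Set.range w, ((linearPart P).toSquareBlock w c).charpoly =
      ∏ i : {i // w i = c}, (Polynomial.X - Polynomial.C (l i)))
    (i : σ) :
    X i ∈ weightedSpectralSubmodule w l (mkDerivation K P) (w i) := by
  induction hi : w i using Nat.strong_induction_on generalizing i with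
  | _ c ih =>
    refine mem_spectralSubmodule_of_charpoly (A := (linearPart P).toSquareBlock w c)
      (v := fun j => X j.1) ?_ (fun j => ?_) ⟨i, hi⟩
    · rw [hl c ⟨i, hi⟩]
      exact prod_mem fun j _ => X_sub_C_mem_monicSplitWithRootsIn <| by
        simpa [j.2] using apply_mem_weightedSpectrum w l j.1
    · rw [Derivation.coeFn_coe, mkDerivation_X]
      exact sub_sum_linear_mem hw (fun j hj => ih (w j) hj j rfl)
        (by simpa [j.2] using mem_quasiHomogeneousFields_iff.1 hP j.1)

theorem eq_zero_of_adjointOperator_eq_zero (hw : ∀ i, w i ≠ 0)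
    (hP : P ∈ quasiHomogeneousFields K w 0)
    (hl : ∀ c ∈ Set.range w, ((linearPart P).toSquareBlock w c).charpoly =
      ∏ i : {i // w i = c}, (Polynomial.X - Polynomial.C (l i)))
    {k : ℕ} (hres : ∀ i, l i ∉ weightedSpectrum w l (w i + k))
    {U : σ → MvPolynomial σ K} (hU : U ∈ quasiHomogeneousFields K w k)
    (hPU : adjointOperator P U = 0) : U = 0 := by
  have derivation_eq (i) : mkDerivation K P (U i) = ∑ j, U j * pderiv j (P i) := by
    rw [mkDerivation_apply_eq_sum, ← sub_eq_zero, ← Finset.sum_sub_distrib]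
    exact congrFun hPU i
  ext1 i
  induction hi : w i using Nat.strong_induction_on generalizing i with
  | _ c ih =>
    have mem_weighted : U i ∈ weightedSpectralSubmodule w l (mkDerivation K P) (c + k) :=
      mem_graded_of_forall_X_mem (hi ▸ mem_quasiHomogeneousFields_iff.1 hU i) fun _ _ j _ =>
        X_mem_weightedSpectralSubmodule hw hP hl j
    have mem_block : U i ∈ spectralSubmodule (mkDerivation K P).toLinearMap
        (l '' {j | w j = c}) := by
      refine mem_spectralSubmodule_of_charpoly (A := (linearPart P).toSquareBlock w c)
        (v := fun j => U j.1) ?_ (fun j => ?_) ⟨i, hi⟩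
      · rw [hl c ⟨i, hi⟩]
        exact prod_mem fun j _ => X_sub_C_mem_monicSplitWithRootsIn ⟨j.1, j.2, rfl⟩
      · have hPj : IsWeightedHomogeneous w (P j.1) c := by
          simpa [j.2] using mem_quasiHomogeneousFields_iff.1 hP j.1
        have hDU := (derivation_eq j.1).trans <|
          sum_mul_pderiv_eq_sum_coeff_smul hw hPj fun j' hj' => ih _ hj' j' rfl
        exact sub_eq_zero.2 hDU ▸ zero_mem _
    have disjoint : Disjoint (weightedSpectrum w l (c + k)) (l '' {j | w j = c}) := by
      rw [Set.disjoint_right]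
      rintro _ ⟨j, rfl, rfl⟩
      exact hres j
    exact Submodule.disjoint_def.1 (disjoint_spectralSubmodule _ disjoint) _ mem_weighted mem_block

end DegreeZero

theorem adjoint_operator_bijective_of_nonresonant_general {σ K : Type*} [Fintype σ] [DecidableEq σ]
    [Field K] {w : σ → ℕ} (hw : ∀ i, w i ≠ 0) {P : σ → MvPolynomial σ K}
    (hP : P ∈ quasiHomogeneousFields K w 0) {l : σ → K}
    (hl : ∀ c ∈ Set.range w, ((linearPart P).toSquareBlock w c).charpoly =
      ∏ i : {i // w i = c}, (Polynomial.X - Polynomial.C (l i)))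
    {k : ℕ} (hres : ∀ i, l i ∉ weightedSpectrum w l (w i + k))
    {Y : σ → MvPolynomial σ K} (hY : Y ∈ quasiHomogeneousFields K w k) :
    ∃! U, U ∈ quasiHomogeneousFields K w k ∧ adjointOperator P U = Y := by
  have := finite_quasiHomogeneousFields (R := K) hw k
  have maps (U) (hU : U ∈ quasiHomogeneousFields K w k) :
      adjointOperator P U ∈ quasiHomogeneousFields K w k := by
    simpa using adjointOperator_mem_quasiHomogeneousFields hP hU
  have inj : Set.InjOn (adjointOperator P) (quasiHomogeneousFields K w k) :=
    LinearMap.injOn_of_disjoint_ker subset_rfl <| Submodule.disjoint_def.2 fun U hU hPU =>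
      eq_zero_of_adjointOperator_eq_zero hw hP hl hres hU hPU
  obtain ⟨U, hU, hPU⟩ := (LinearMap.injOn_iff_surjOn maps).1 inj hY
  exact ⟨U, ⟨hU, hPU⟩, fun V hV => inj hV.1 hU (hV.2.trans hPU.symm)⟩

end

/-- **Invertibility of the weighted homological operator.**
Let `K` be a field of characteristic zero, `w` a weighting of `K^n`, and `P` a tuple of
polynomials that is quasi-homogeneous of weighted degree `0`.  Let `A i j` be the
coefficient of `x^j` in `P^i` and let `λ` be a `w`-compatible ordering of the eigenvalues
of `A`.  If `λ` has no resonances of weighted degree `k` (`k ≥ 1`), then the adjoint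
operator `ad_P` is bijective on quasi-homogeneous polynomial vector fields of weighted
degree `k`: for every such tuple `Y`, there is a unique such tuple `U` with
`∑ j, (P^j * ∂_j U^i - U^j * ∂_j P^i) = Y^i` for all `i`. -/
theorem adjoint_operator_bijective_of_nonresonant
    (K : Type*) [Field K] [CharZero K] (n : ℕ)
    (w : Fin n → ℕ) (hw1 : ∀ i, 1 ≤ w i) (hwmono : Monotone w)
    (P : Fin n → MvPolynomial (Fin n) K)
    (hP : ∀ (i : Fin n), ∀ β ∈ (P i).support, (∑ j, w j * β j) = w i)
    (A : Matrix (Fin n) (Fin n) K)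
    (hA : ∀ i j, A i j = MvPolynomial.coeff (Finsupp.single j 1) (P i))
    (l : Fin n → K)
    (hl : ∀ c : ℕ, c ∈ Set.range w →
      (A.submatrix
          (Subtype.val : {i : Fin n // w i = c} → Fin n)
          (Subtype.val : {i : Fin n // w i = c} → Fin n)).charpoly =
        ∏ i : {i : Fin n // w i = c}, (Polynomial.X - Polynomial.C (l i.val)))
    (k : ℕ) (hk : 1 ≤ k)
    (hres : ∀ (i : Fin n) (α : Fin n →₀ ℕ), (∑ j, w j * α j) = w i + k →
      (∑ j, (α j : K) * l j) ≠ l i) :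
    ∀ Y : Fin n → MvPolynomial (Fin n) K,
      (∀ (i : Fin n), ∀ β ∈ (Y i).support, (∑ j, w j * β j) = w i + k) →
      ∃! U : Fin n → MvPolynomial (Fin n) K,
        (∀ (i : Fin n), ∀ β ∈ (U i).support, (∑ j, w j * β j) = w i + k) ∧
        (∀ i : Fin n,
          (∑ j, (P j * MvPolynomial.pderiv j (U i) - U j * MvPolynomial.pderiv j (P i)))
            = Y i) := by
  obtain rfl : A = linearPart P := Matrix.ext hA
  have nonresonant (i) : l i ∉ weightedSpectrum w l (w i + k) := fun h =>
    have ⟨α, hα, hαi⟩ := mem_weightedSpectrum_iff_sum.1 h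
    hres i α hα hαi
  intro Y hY
  simpa [mem_quasiHomogeneousFields_iff_sum, funext_iff, adjointOperator_apply] using
    adjoint_operator_bijective_of_nonresonant_general (fun i => Nat.one_le_iff_ne_zero.1 (hw1 i))
      (mem_quasiHomogeneousFields_iff_sum.2 hP) hl nonresonant
      (mem_quasiHomogeneousFields_iff_sum.2 hY)
end

section
/- Let w be a weighting of ℝ^n and A : Matrix (Fin n) (Fin n) ℝ a matrix with A i j = 0 whenever w j < w i. Let λ : Fin n → ℂ be such that for every value c attained by w, the characteristic polynomial over ℂ of the square submatrix of A.map(ℝ → ℂ) on the index set {i : w i = c} equals the product over {i : w i = c} of (T − λ i). If λ is non-resonant with respect to w — i.e. for every i and every finitely supported α : Fin n → ℕ with ⟨w,α⟩ > w i one has Σ_j (α j)·(λ j) ≠ λ i — then every λ j has nonzero real part: (λ j).re ≠ 0 for all j. -/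
/-!
The diagonal blocks are real, so the conjugate of `λ j` is again some eigenvalue `λ k`. If `λ j`
were purely imaginary, then `λ k = -λ j`, and `λ j = 2 λ j + λ k` would be a resonance, because
`2 w j + w k > w j`.
-/

open Polynomial
open scoped ComplexConjugate

section Nonresonance

variable {ι M N : Type*} [AddCommMonoid M] [AddCommMonoid N]

/-- Non-resonance of `l` with respect to the weights `w`: no `l i` is a combination of the `l j` by
a multi-index of weighted degree greater than `w i`. Both `⟨w, α⟩` and `Σ_j (α j)·(l j)` are
`Finsupp.weight`. -/
def IsNonresonant [LT M] (w : ι → M) (l : ι → N) : Prop :=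
  ∀ (i : ι) (α : ι →₀ ℕ), w i < Finsupp.weight w α → Finsupp.weight l α ≠ l i

theorem isNonresonant_iff_sum_ne [Fintype ι] {S : Type*} [Semiring S] {w : ι → ℕ} {l : ι → S} :
    IsNonresonant w l ↔
      ∀ (i : ι) (α : ι →₀ ℕ), w i < ∑ j, w j * α j → ∑ j, (α j : S) * l j ≠ l i := by
  simp only [IsNonresonant, Finsupp.weight_eq_sum, smul_eq_mul, nsmul_eq_mul, mul_comm (w _)]

theorem weight_single_two_add_single (w : ι → M) (j k : ι) :
    Finsupp.weight w (Finsupp.single j 2 + Finsupp.single k 1) = w j + (w j + w k) := by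
  rw [map_add, Finsupp.weight_single, Finsupp.weight_single, two_nsmul, one_nsmul, add_assoc]

theorem IsNonresonant.add_ne_zero [LT M] [AddLeftStrictMono M] {w : ι → M} {l : ι → N}
    (h : IsNonresonant w l) {j k : ι} (hjk : 0 < w j + w k) : l j + l k ≠ 0 := by
  intro hl
  apply h j (Finsupp.single j 2 + Finsupp.single k 1)
  · rw [weight_single_two_add_single]
    exact lt_add_of_pos_right (w j) hjk
  · rw [weight_single_two_add_single, hl, add_zero]

end Nonresonance

section CompatibleOrdering

variable {R S : Type*} [CommRing R] [CommRing S] [Algebra R S]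

theorem algHom_mem_range_of_map_eq_prod_X_sub_C [IsDomain S] {κ : Type*} [Fintype κ] {p : R[X]}
    {l : κ → S} (hp : p.map (algebraMap R S) = ∏ i, (X - C (l i))) (f : S →ₐ[R] S) (j : κ) :
    f (l j) ∈ Set.range l := by
  have aeval_eq_prod (z : S) : aeval z p = ∏ i, (z - l i) := by
    simp only [← eval_map_algebraMap, hp, eval_prod, eval_sub, eval_X, eval_C]
  have hj : aeval (l j) p = 0 := by
    rw [aeval_eq_prod, Finset.prod_eq_zero (Finset.mem_univ j) (sub_self _)]
  have hfj : ∏ i, (f (l j) - l i) = 0 := by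
    rw [← aeval_eq_prod, aeval_algHom_apply, hj, map_zero]
  obtain ⟨k, -, hk⟩ := Finset.prod_eq_zero_iff.mp hfj
  exact ⟨k, (sub_eq_zero.mp hk).symm⟩

variable {ι M : Type*} [Fintype ι] [DecidableEq ι] [DecidableEq M]

/-- The family `l` is a `w`-compatible ordering of the eigenvalues of `A` in `S`: on each level set
of `w` it lists, with multiplicity, the eigenvalues of the corresponding diagonal block of `A`. -/
def IsCompatibleOrdering (w : ι → M) (A : Matrix ι ι R) (l : ι → S) : Prop :=
  ∀ c ∈ Set.range w, ((A.map (algebraMap R S)).toSquareBlock w c).charpoly =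
    ∏ i : {i // w i = c}, (X - C (l i))

theorem IsCompatibleOrdering.algHom_mem_image_preimage [IsDomain S] {w : ι → M}
    {A : Matrix ι ι R} {l : ι → S} (h : IsCompatibleOrdering w A l) (f : S →ₐ[R] S) (j : ι) :
    f (l j) ∈ l '' (w ⁻¹' {w j}) := by
  have hblock : (A.toSquareBlock w (w j)).charpoly.map (algebraMap R S) =
      ∏ i : {i // w i = w j}, (X - C (l i)) :=
    (Matrix.charpoly_map _ _).symm.trans (h (w j) ⟨j, rfl⟩)
  obtain ⟨⟨k, hwk⟩, hlk⟩ := algHom_mem_range_of_map_eq_prod_X_sub_C hblock f ⟨j, rfl⟩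
  exact ⟨k, hwk, hlk⟩

end CompatibleOrdering

theorem weighted_nonresonant_hyperbolic_general {ι M : Type*} [AddCommMonoid M] [Preorder M]
    [AddLeftStrictMono M] {w : ι → M} (hw : ∀ i, 0 < w i) {l : ι → ℂ}
    (hconj : ∀ j, conj (l j) ∈ Set.range l) (hres : IsNonresonant w l) (j : ι) :
    (l j).re ≠ 0 := by
  intro hre
  obtain ⟨k, hk⟩ := hconj j
  have hsum : l j + l k = 0 := by
    rw [hk, Complex.add_conj, hre, mul_zero, Complex.ofReal_zero]
  exact hres.add_ne_zero (add_pos (hw j) (hw k)) hsum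

/-- **Weighted non-resonance implies hyperbolicity.**
Let `w` be a weighting of `ℝ^n` and `A` a real matrix with `A i j = 0` whenever
`w j < w i`.  Let `λ : Fin n → ℂ` be a `w`-compatible ordering of the eigenvalues of `A`:
for every value `c` attained by `w`, the characteristic polynomial of the submatrix of
`A` (mapped to `ℂ`) on `{i : w i = c}` equals `∏_{i : w i = c} (T - λ i)`.  If `λ` is
non-resonant with respect to `w`, then every `λ j` has nonzero real part. -/
theorem weighted_nonresonant_hyperbolic
    (n : ℕ) (w : Fin n → ℕ) (hw1 : ∀ i, 1 ≤ w i) (hwmono : Monotone w)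
    (A : Matrix (Fin n) (Fin n) ℝ)
    (hA : ∀ i j, w j < w i → A i j = 0)
    (l : Fin n → ℂ)
    (hl : ∀ c : ℕ, c ∈ Set.range w →
      ((A.map (Complex.ofReal)).submatrix
          (Subtype.val : {i : Fin n // w i = c} → Fin n)
          (Subtype.val : {i : Fin n // w i = c} → Fin n)).charpoly =
        ∏ i : {i : Fin n // w i = c}, (Polynomial.X - Polynomial.C (l i.val)))
    (hres : ∀ (i : Fin n) (α : Fin n →₀ ℕ), w i < ∑ j, w j * α j →
      (∑ j, (α j : ℂ) * l j) ≠ l i) :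
    ∀ j, (l j).re ≠ 0 := by
  have hcompat : IsCompatibleOrdering w A l := hl
  exact weighted_nonresonant_hyperbolic_general hw1
    (fun j ↦ Set.image_subset_range _ _
      (hcompat.algHom_mem_image_preimage Complex.conjAe.toAlgHom j))
    (isNonresonant_iff_sum_ne.mpr hres)
end

section
/- Let K be a field of characteristic zero and n a natural number. If D is a K-linear derivation of MvPowerSeries (Fin n) K that is locally nilpotent — i.e. for every f there exists k ∈ ℕ with D^∘k(f) = 0, where D^∘k is the k-fold iterate of D — then D = 0. -/
/-!
If `D` is locally nilpotent and `a`, `b` are the largest orders with `D^[a] f ≠ 0` and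
`D^[b] g ≠ 0`, then Leibniz' rule leaves a single term,
`D^[a + b] (f * g) = (a + b).choose a • (D^[a] f * D^[b] g)`, which is nonzero in a domain of
characteristic zero. Hence `D (f * g) = 0` forces `a = b = 0`, and taking `f * g = 1` shows that `D`
kills every unit. In a local ring each `f` is a unit or differs from `1` by a unit.
-/

theorem iterate_eq_zero_of_le {M F : Type*} [Zero M] [FunLike F M M] [ZeroHomClass F M M] {φ : F}
    {x : M} {m n : ℕ} (hmn : m ≤ n) (hm : φ^[m] x = 0) : φ^[n] x = 0 := by
  rw [← Nat.sub_add_cancel hmn, Function.iterate_add_apply, hm, iterate_map_zero]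

section Derivation

open Finset

variable {R A : Type*} [CommSemiring R] [CommSemiring A] [Algebra R A] (D : Derivation R A A)

theorem derivation_iterate_mul (n : ℕ) (f g : A) :
    D^[n] (f * g) =
      ∑ ij ∈ antidiagonal n, n.choose ij.1 • (D^[ij.1] f * D^[ij.2] g) := by
  induction n with
  | zero => simp
  | succ n ih =>
    rw [sum_antidiagonal_choose_succ_nsmul (M := A) (fun i j ↦ D^[i] f * D^[j] g) n]
    simp only [Function.iterate_succ_apply', ih, map_sum, map_nsmul, Derivation.leibniz,
      smul_eq_mul, smul_add, sum_add_distrib]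
    congr 1
    refine sum_congr rfl fun ⟨i, j⟩ hij ↦ ?_
    rw [n.choose_symm_of_eq_add (HasAntidiagonal.mem_antidiagonal.1 hij).symm, mul_comm]

variable {D} {f g : A}

theorem derivation_iterate_add_mul_of_iterate_succ_eq_zero {a b : ℕ}
    (hf : D^[a + 1] f = 0) (hg : D^[b + 1] g = 0) :
    D^[a + b] (f * g) = (a + b).choose a • (D^[a] f * D^[b] g) := by
  rw [derivation_iterate_mul, sum_eq_single_of_mem (a, b) (HasAntidiagonal.mem_antidiagonal.2 rfl)]
  rintro ⟨i, j⟩ hij hne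
  rw [HasAntidiagonal.mem_antidiagonal] at hij
  obtain hi | hj : a + 1 ≤ i ∨ b + 1 ≤ j := by grind
  · rw [iterate_eq_zero_of_le hi hf, zero_mul, nsmul_zero]
  · rw [iterate_eq_zero_of_le hj hg, mul_zero, nsmul_zero]

variable [NoZeroDivisors A] [CharZero A]

theorem derivation_eq_zero_of_map_mul_eq_zero (hf : ∃ k, D^[k] f = 0) (hg : ∃ k, D^[k] g = 0)
    (hfg : f * g ≠ 0) (hDfg : D (f * g) = 0) : D f = 0 := by
  obtain ⟨a, hfa, hfa'⟩ :=
    Nat.exists_not_and_succ_of_not_zero_of_exists (p := fun k ↦ D^[k] f = 0)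
      (left_ne_zero_of_mul hfg) hf
  obtain ⟨b, hgb, hgb'⟩ :=
    Nat.exists_not_and_succ_of_not_zero_of_exists (p := fun k ↦ D^[k] g = 0)
      (right_ne_zero_of_mul hfg) hg
  have htop : D^[a + b] (f * g) ≠ 0 := by
    rw [derivation_iterate_add_mul_of_iterate_succ_eq_zero hfa' hgb']
    have hchoose : ((a + b).choose a : A) ≠ 0 :=
      Nat.cast_ne_zero.2 (Nat.choose_pos (Nat.le_add_right a b)).ne'
    rw [nsmul_eq_mul]
    exact mul_ne_zero hchoose (mul_ne_zero hfa hgb)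
  obtain rfl : a = 0 := by
    by_contra ha
    exact htop (iterate_eq_zero_of_le (m := 1) (by lia) hDfg)
  exact hfa'

theorem derivation_eq_zero_of_isUnit (hD : ∀ f, ∃ k, D^[k] f = 0) (hf : IsUnit f) : D f = 0 := by
  obtain ⟨g, hfg⟩ := hf.exists_right_inv
  refine derivation_eq_zero_of_map_mul_eq_zero (hD f) (hD g) ?_ ?_
  · rw [hfg]
    exact one_ne_zero
  · rw [hfg, D.map_one_eq_zero]

end Derivation

theorem locallyNilpotent_derivation_eq_zero_general {R A : Type*} [CommSemiring R] [CommRing A]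
    [Algebra R A] [IsLocalRing A] [NoZeroDivisors A] [CharZero A] (D : Derivation R A A)
    (hD : ∀ f, ∃ k, D^[k] f = 0) : D = 0 := by
  ext f
  rw [Derivation.zero_apply]
  obtain hf | hf := IsLocalRing.isUnit_or_isUnit_one_sub_self f
  · exact derivation_eq_zero_of_isUnit hD hf
  · have h : D (1 - f) = 0 := derivation_eq_zero_of_isUnit hD hf
    rwa [map_sub, D.map_one_eq_zero, zero_sub, neg_eq_zero] at h

/-- **The only locally nilpotent derivation of a formal power series algebra is zero.**
Let `K` be a field of characteristic zero. If `D` is a `K`-linear derivation of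
`MvPowerSeries (Fin n) K` such that for every `f` there exists `k` with `D^[k] f = 0`,
then `D = 0`. -/
theorem locallyNilpotent_derivation_eq_zero
    (K : Type*) [Field K] [CharZero K] (n : ℕ)
    (D : Derivation K (MvPowerSeries (Fin n) K) (MvPowerSeries (Fin n) K))
    (hD : ∀ f : MvPowerSeries (Fin n) K, ∃ k : ℕ, (⇑D)^[k] f = 0) :
    D = 0 := by
  have : CharZero (MvPowerSeries (Fin n) K) := algebraRat.charZero _
  exact locallyNilpotent_derivation_eq_zero_general D hD
end
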